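/- arXiv:1812.09753 — 2 statements merged into one kernel-verified Lean document; each statement's English description precedes it below -/
import Mathlib

section
/- Let n ≥ 2 and 0 < D < π, and let z ∈ S^n. If X ⊆ S^n is a Borel measurable set with geodesic diameter diam X ≤ D, then σ(X) ≤ σ(B(z, D/2)). -/
/-!
The proof is by two-point symmetrization. Polarizing a closed set `K` in a hyperplane through the
origin neither increases its diameter nor decreases its volume. If a ball `C` has its centre on the
chosen side of the hyperplane, then the volume of `K ∩ C` does not decrease either, and it grows by
at least the volume of the part of `C \ K` that is reflected into `K \ C`.

Let `X` be closed of diameter at most `D` and `C = B(z, D / 2)`. The compact subsets of the sphere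
form a compact space in the Vietoris topology, on which volume is upper semicontinuous. Hence,
among the compact sets of diameter at most `D` and volume at least that of `X`, some `K` maximizes
the volume of `K ∩ C`.

* If `K \ C` is null, then `C` has at least the volume of `K`.
* If `C \ K` is null, then `K` contains the open ball. A point `x` of `K` outside `C` would have
  distance greater than `D` from a point of the open ball, found by prolonging the geodesic from `x`
  to `z` beyond `z`. So `K ⊆ C`.
* Otherwise choose density points `x` of `K \ C` and `y` of `C \ K`. The reflection exchanging them
  maps a part of `K \ C` of positive volume into `C \ K`, and `z` lies on the side of `y`, so
  polarization contradicts maximality.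

The only property of the volume that matters is its invariance under reflections. These act
transitively on the compact sphere, so an invariant measure is finite as soon as one ball has finite
measure, and positive on nonempty open sets as soon as it is nonzero.
-/

open MeasureTheory

noncomputable section

/-- Euclidean space `ℝ^{n+1}`. -/
abbrev Esp (n : ℕ) : Type := EuclideanSpace ℝ (Fin (n + 1))

/-- The unit sphere `S^n ⊆ ℝ^{n+1}`, as a subtype. -/
abbrev Sph (n : ℕ) : Type := Metric.sphere (0 : Esp n) 1

/-- Geodesic distance `d(x,y) = arccos ⟨x,y⟩` on the sphere. -/
def gd {n : ℕ} (x y : Sph n) : ℝ :=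
  Real.arccos (inner (𝕜 := ℝ) (x : Esp n) (y : Esp n))

/-- Closed geodesic ball `B(z,r) = {x ∈ Sⁿ : d(x,z) ≤ r}`. -/
def sphBall {n : ℕ} (z : Sph n) (r : ℝ) : Set (Sph n) := {x | gd x z ≤ r}

/-- Geodesic diameter `diam X = sup {d(x,y) : x, y ∈ X}`. -/
def sphDiam {n : ℕ} (X : Set (Sph n)) : ℝ :=
  sSup {r | ∃ x ∈ X, ∃ y ∈ X, r = gd x y}

/-- Spherical volume: the `n`-dimensional (Hausdorff) surface measure on `S^n`. -/
def sphVol (n : ℕ) : Measure (Sph n) := μH[(n : ℝ)]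

open Filter InnerProductGeometry Metric Set Topology TopologicalSpace

section Polarization

variable {α : Type*} {τ : α → α} {H K C : Set α}

/-- The polarization (two-point symmetrization) of `K` towards `H`, where `τ` is thought of as the
reflection in a hyperplane and `H` as one of the two half-spaces bounded by it: of each pair of
mirror images of which exactly one belongs to `K`, the polarization keeps the one in `H`. -/
def polarization (τ : α → α) (H K : Set α) : Set α :=
  (K ∩ τ ⁻¹' K) ∪ ((K ∪ τ ⁻¹' K) ∩ H)

lemma isClosed_polarization [TopologicalSpace α] (hτ : Continuous τ) (hH : IsClosed H)
    (hK : IsClosed K) : IsClosed (polarization τ H K) :=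
  (hK.inter (hK.preimage hτ)).union ((hK.union (hK.preimage hτ)).inter hH)

lemma measurableSet_polarization [MeasurableSpace α] (hτ : Measurable τ) (hH : MeasurableSet H)
    (hK : MeasurableSet K) : MeasurableSet (polarization τ H K) :=
  (hK.inter (hτ hK)).union ((hK.union (hτ hK)).inter hH)

lemma rel_of_mem_polarization {R : α → α → Prop} (hR : ∀ x y, R x y → R y x)
    (hτ : ∀ x y, R (τ x) (τ y) → R x y) (hH : ∀ x ∈ H, ∀ y ∈ H, R (τ x) y → R x y)
    (hK : ∀ x ∈ K, ∀ y ∈ K, R x y) :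
    ∀ x ∈ polarization τ H K, ∀ y ∈ polarization τ H K, R x y := by
  rintro x (⟨hx, hτx⟩ | ⟨hx | hτx, hxH⟩) y (⟨hy, hτy⟩ | ⟨hy | hτy, hyH⟩)
  · exact hK x hx y hy
  · exact hK x hx y hy
  · exact hτ x y (hK _ hτx _ hτy)
  · exact hK x hx y hy
  · exact hK x hx y hy
  · exact hR y x (hH y hyH x hxH (hK _ hτy _ hx))
  · exact hτ x y (hK _ hτx _ hτy)
  · exact hH x hxH y hyH (hK _ hτx _ hy)
  · exact hτ x y (hK _ hτx _ hτy)

lemma preimage_sdiff_polarization_subset (hτ : Function.Involutive τ) (hτH : ∀ x ∉ H, τ x ∈ H)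
    (hC : ∀ x ∈ C, x ∉ H → τ x ∈ C) :
    τ ⁻¹' ((K ∩ C) \ polarization τ H K) ⊆
      ((polarization τ H K ∩ C) \ K) \ τ ⁻¹' (K \ C) := by
  rintro x ⟨⟨hτxK, hτxC⟩, hτxP⟩
  have hτxH : τ x ∉ H := fun h => hτxP (.inr ⟨.inl hτxK, h⟩)
  have hxK : x ∉ K := fun h => hτxP (.inl ⟨hτxK, by rwa [mem_preimage, hτ x]⟩)
  have hxH : x ∈ H := by simpa only [hτ x] using hτH _ hτxH
  have hxC : x ∈ C := by simpa only [hτ x] using hC _ hτxC hτxH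
  exact ⟨⟨⟨.inr ⟨.inr hτxK, hxH⟩, hxC⟩, hxK⟩, fun h => h.2 hτxC⟩

lemma preimage_sdiff_inter_sdiff_subset (hC : ∀ x ∈ C, x ∉ H → τ x ∈ C) :
    τ ⁻¹' (K \ C) ∩ (C \ K) ⊆ (polarization τ H K ∩ C) \ K := by
  rintro x ⟨⟨hτxK, hτxC⟩, hxC, hxK⟩
  have hxH : x ∈ H := by
    by_contra hxH
    exact hτxC (hC x hxC hxH)
  exact ⟨⟨.inr ⟨.inr hτxK, hxH⟩, hxC⟩, hxK⟩

lemma measure_inter_add_le_measure_polarization_inter [MeasurableSpace α] {μ : Measure α}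
    (hτ : Function.Involutive τ) (hμ : MeasurePreserving τ μ μ) (hH : MeasurableSet H)
    (hτH : ∀ x ∉ H, τ x ∈ H) (hK : MeasurableSet K) (hCm : MeasurableSet C)
    (hC : ∀ x ∈ C, x ∉ H → τ x ∈ C) :
    μ (K ∩ C) + μ (τ ⁻¹' (K \ C) ∩ (C \ K)) ≤ μ (polarization τ H K ∩ C) := by
  set P := polarization τ H K
  set G := τ ⁻¹' (K \ C) ∩ (C \ K)
  have hP : MeasurableSet P := measurableSet_polarization hμ.measurable hH hK
  have hG : MeasurableSet G := (hμ.measurable (hK.diff hCm)).inter (hCm.diff hK)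
  have hlost := preimage_sdiff_polarization_subset (K := K) hτ hτH hC
  have hdisj : Disjoint (τ ⁻¹' ((K ∩ C) \ P)) G :=
    disjoint_left.2 fun _ hx hxG => (hlost hx).2 hxG.1
  have hexchange : μ ((K ∩ C) \ P) + μ G ≤ μ ((P ∩ C) \ K) := by
    rw [← hμ.measure_preimage ((hK.inter hCm).diff hP).nullMeasurableSet,
      ← measure_union hdisj hG]
    exact measure_mono
      (union_subset (hlost.trans sdiff_subset) (preimage_sdiff_inter_sdiff_subset hC))
  calc μ (K ∩ C) + μ G
      = μ (K ∩ C ∩ P) + (μ ((K ∩ C) \ P) + μ G) := by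
        rw [← add_assoc, measure_inter_add_sdiff _ hP]
    _ ≤ μ (P ∩ C ∩ K) + μ ((P ∩ C) \ K) := by
        rw [show K ∩ C ∩ P = P ∩ C ∩ K by tauto_set]
        gcongr
    _ = μ (P ∩ C) := measure_inter_add_sdiff _ hK

end Polarization

section Homogeneous

variable {α : Type*} [TopologicalSpace α] [CompactSpace α] [MeasurableSpace α]
  [OpensMeasurableSpace α] {μ : Measure α} {U : Set α}

lemma exists_measure_univ_le_nat_mul
    (hμ : ∀ x y : α, ∃ f : α → α, Continuous f ∧ MeasurePreserving f μ μ ∧ f x = y)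
    (hU : IsOpen U) (hne : U.Nonempty) : ∃ N : ℕ, μ univ ≤ N * μ U := by
  obtain ⟨u, hu⟩ := hne
  choose f hfc hfμ hfu using fun x => hμ x u
  obtain ⟨t, ht⟩ := isCompact_univ.elim_finite_subcover (fun x => f x ⁻¹' U)
    (fun x => hU.preimage (hfc x)) fun x _ => mem_iUnion.2 ⟨x, by rwa [mem_preimage, hfu]⟩
  refine ⟨t.card, ?_⟩
  calc μ univ ≤ ∑ x ∈ t, μ (f x ⁻¹' U) :=
        (measure_mono ht).trans (measure_biUnion_finset_le t _)
    _ = t.card * μ U := by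
        simp_rw [fun x => (hfμ x).measure_preimage hU.measurableSet.nullMeasurableSet,
          Finset.sum_const, nsmul_eq_mul]

lemma isFiniteMeasure_of_homogeneous
    (hμ : ∀ x y : α, ∃ f : α → α, Continuous f ∧ MeasurePreserving f μ μ ∧ f x = y)
    (hU : IsOpen U) (hne : U.Nonempty) (hU_top : μ U ≠ ⊤) : IsFiniteMeasure μ := by
  obtain ⟨N, hN⟩ := exists_measure_univ_le_nat_mul hμ hU hne
  exact ⟨hN.trans_lt (ENNReal.mul_lt_top (ENNReal.natCast_lt_top N) hU_top.lt_top)⟩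

lemma isOpenPosMeasure_of_homogeneous
    (hμ : ∀ x y : α, ∃ f : α → α, Continuous f ∧ MeasurePreserving f μ μ ∧ f x = y)
    (hμ₀ : μ ≠ 0) : μ.IsOpenPosMeasure where
  open_pos U hU hne hU₀ := by
    obtain ⟨N, hN⟩ := exists_measure_univ_le_nat_mul hμ hU hne
    exact hμ₀ (Measure.measure_univ_eq_zero.1 (by simpa [hU₀] using hN))

end Homogeneous

section Density

lemma ae_tendsto_measure_inter_closedBall_div_of_subtype {β : Type*} [MetricSpace β]
    [SecondCountableTopology β] [HasBesicovitchCovering β] [MeasurableSpace β] [BorelSpace β]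
    {s : Set β} (hs : MeasurableSet s) (μ : Measure s) [IsFiniteMeasure μ] (A : Set s) :
    ∀ᵐ x ∂μ.restrict A,
      Tendsto (fun r => μ (A ∩ closedBall x r) / μ (closedBall x r)) (𝓝[>] 0) (𝓝 1) := by
  have hemb := MeasurableEmbedding.subtype_coe hs
  have h := Besicovitch.ae_tendsto_measure_inter_div (μ.map (↑)) ((↑) '' A : Set β)
  rw [hemb.restrict_map, preimage_image_eq A Subtype.val_injective, hemb.ae_map_iff] at h
  have hball (x : s) (r : ℝ) : (↑) ⁻¹' closedBall (x : β) r = closedBall x r := rfl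
  simpa only [hemb.map_apply, preimage_inter, preimage_image_eq A Subtype.val_injective,
    hball] using h

lemma exists_mem_eventually_half_mul_measure_closedBall_lt {β : Type*} [MetricSpace β]
    [SecondCountableTopology β] [HasBesicovitchCovering β] [MeasurableSpace β] [BorelSpace β]
    {s : Set β} (hs : MeasurableSet s) (μ : Measure s) [IsFiniteMeasure μ] {A : Set s}
    (hA : MeasurableSet A) (hA₀ : μ A ≠ 0) :
    ∃ x ∈ A, ∀ᶠ r in 𝓝[>] 0, 2⁻¹ * μ (closedBall x r) < μ (A ∩ closedBall x r) := by
  have : (ae (μ.restrict A)).NeBot := by rwa [ae_neBot, Ne, Measure.restrict_eq_zero]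
  obtain ⟨x, hx, hxA⟩ :=
    ((ae_tendsto_measure_inter_closedBall_div_of_subtype hs μ A).and (ae_restrict_mem hA)).exists
  refine ⟨x, hxA, ?_⟩
  filter_upwards [hx.eventually (lt_mem_nhds (b := 1) ENNReal.one_half_lt_one)] with r hr
  exact ENNReal.mul_lt_of_lt_div hr

lemma measure_preimage_inter_ne_zero_of_half_mul_lt {α : Type*} [PseudoMetricSpace α]
    [MeasurableSpace α] [OpensMeasurableSpace α] {μ : Measure α} {τ : α ≃ᵢ α}
    (hτ : MeasurePreserving τ μ μ) {A B : Set α} (hA : MeasurableSet A) (hB : MeasurableSet B)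
    {y : α} {r : ℝ} (hAr : 2⁻¹ * μ (closedBall (τ y) r) < μ (A ∩ closedBall (τ y) r))
    (hBr : 2⁻¹ * μ (closedBall y r) < μ (B ∩ closedBall y r)) :
    μ (τ ⁻¹' A ∩ B) ≠ 0 := by
  intro h₀
  have hpre : τ ⁻¹' closedBall (τ y) r = closedBall y r := τ.isometry.preimage_closedBall y r
  rw [← hτ.measure_preimage (hA.inter measurableSet_closedBall).nullMeasurableSet,
    ← hτ.measure_preimage measurableSet_closedBall.nullMeasurableSet, preimage_inter, hpre] at hAr
  have hle : μ (τ ⁻¹' A ∩ closedBall y r) + μ (B ∩ closedBall y r) ≤ μ (closedBall y r) := by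
    rw [← measure_union_add_inter _ (hB.inter measurableSet_closedBall),
      measure_mono_null (inter_subset_inter inter_subset_left inter_subset_left) h₀, add_zero]
    exact measure_mono (union_subset inter_subset_right inter_subset_right)
  have hlt := (ENNReal.add_lt_add hAr hBr).trans_le hle
  rw [← add_mul, ENNReal.inv_two_add_inv_two, one_mul] at hlt
  exact hlt.false

end Density

section Compacts

variable {α : Type*} [TopologicalSpace α]

lemma upperSemicontinuous_measure_compacts [MeasurableSpace α] (μ : Measure α)
    [μ.OuterRegular] : UpperSemicontinuous fun K : Compacts α => μ K := by
  intro K c hc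
  obtain ⟨U, hKU, hU, hUc⟩ := (K : Set α).exists_isOpen_lt_of_lt c hc
  filter_upwards [(Compacts.isOpen_subsets_of_isOpen hU).mem_nhds hKU] with L hL
  exact (measure_mono hL).trans_lt hUc

lemma isClosed_setOf_compacts_rel {R : α → α → Prop} (hR : IsClosed {p : α × α | R p.1 p.2}) :
    IsClosed {K : Compacts α | ∀ x ∈ K, ∀ y ∈ K, R x y} := by
  have hcont : Continuous fun K : Compacts α => K ×ˢ K :=
    Compacts.continuous_prod.comp (continuous_id.prodMk continuous_id)
  convert (Compacts.isClosed_subsets_of_isClosed hR).preimage hcont using 1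
  ext K
  exact ⟨fun hK p hp => hK p.1 hp.1 p.2 hp.2, fun hK x hx y hy => hK (mk_mem_prod hx hy)⟩

lemma exists_compacts_rel_forall_measure_inter_le [PseudoMetrizableSpace α] [CompactSpace α]
    [MeasurableSpace α] [BorelSpace α] (μ : Measure α) [IsFiniteMeasure μ] {R : α → α → Prop}
    (hR : IsClosed {p : α × α | R p.1 p.2}) {X C : Set α} (hX : IsClosed X)
    (hXR : ∀ x ∈ X, ∀ y ∈ X, R x y) (hC : MeasurableSet C) :
    ∃ K : Compacts α, (∀ x ∈ K, ∀ y ∈ K, R x y) ∧ μ X ≤ μ K ∧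
      ∀ L : Compacts α, (∀ x ∈ L, ∀ y ∈ L, R x y) → μ X ≤ μ L → μ (L ∩ C) ≤ μ (K ∩ C) := by
  have hclosed := (isClosed_setOf_compacts_rel hR).inter
    ((upperSemicontinuous_measure_compacts μ).isClosed_preimage (μ X))
  obtain ⟨K, ⟨hKR, hKX⟩, hmax⟩ := UpperSemicontinuousOn.exists_isMaxOn
    (s := {K : Compacts α | ∀ x ∈ K, ∀ y ∈ K, R x y} ∩ {K | μ X ≤ μ K})
    (f := fun K : Compacts α => μ.restrict C K)
    ⟨⟨X, hX.isCompact⟩, hXR, le_refl (μ X)⟩ hclosed.isCompact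
    ((upperSemicontinuous_measure_compacts (μ.restrict C)).upperSemicontinuousOn _)
  refine ⟨K, hKR, hKX, fun L hLR hLX => ?_⟩
  have hle : μ.restrict C L ≤ μ.restrict C K := hmax ⟨hLR, hLX⟩
  simpa only [Measure.restrict_apply' hC] using hle

end Compacts

section Sphere

variable {E : Type*} [NormedAddCommGroup E] [InnerProductSpace ℝ E] {w : E}
  {x y z : sphere (0 : E) 1} {D r : ℝ}

/-- The reflection of the unit sphere in the hyperplane orthogonal to `w` (the identity if
`w = 0`). -/
def sphereReflection (w : E) : sphere (0 : E) 1 ≃ᵢ sphere (0 : E) 1 where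
  toFun p := ⟨(ℝ ∙ w)ᗮ.reflection p, by simp⟩
  invFun p := ⟨(ℝ ∙ w)ᗮ.reflection p, by simp⟩
  left_inv p := by ext1; simp
  right_inv p := by ext1; simp
  isometry_toFun := Isometry.of_dist_eq fun p q => by simp [Subtype.dist_eq]

/-- The closed half of the unit sphere on the side of `w` of the hyperplane orthogonal to `w`. -/
def halfSphere (w : E) : Set (sphere (0 : E) 1) := {p | 0 ≤ inner ℝ (p : E) w}

/-- The closed geodesic ball of radius `r` about `z` in the unit sphere, whose geodesic distance is
the angle. -/
def sphericalCap (z : sphere (0 : E) 1) (r : ℝ) : Set (sphere (0 : E) 1) :=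
  {x | angle (x : E) z ≤ r}

lemma coe_sphereReflection (w : E) (p : sphere (0 : E) 1) :
    (sphereReflection w p : E) = (ℝ ∙ w)ᗮ.reflection (p : E) := rfl

lemma involutive_sphereReflection (w : E) : Function.Involutive (sphereReflection w) :=
  (sphereReflection w).left_inv

lemma sphereReflection_sub (x y : sphere (0 : E) 1) : sphereReflection ((x : E) - y) x = y :=
  Subtype.ext (Submodule.reflection_sub (by simp))

lemma inner_sphereReflection_self (w : E) (p : sphere (0 : E) 1) :
    inner ℝ (sphereReflection w p : E) w = -inner ℝ (p : E) w := by
  rw [coe_sphereReflection, ← LinearIsometryEquiv.inner_map_map (ℝ ∙ w)ᗮ.reflection,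
    Submodule.reflection_reflection, Submodule.reflection_orthogonalComplement_singleton_eq_neg,
    inner_neg_right]

lemma sphereReflection_mem_halfSphere (hx : x ∉ halfSphere w) :
    sphereReflection w x ∈ halfSphere w := by
  have hxw : inner ℝ (x : E) w < 0 := not_le.1 hx
  simpa [halfSphere, inner_sphereReflection_self] using hxw.le

lemma angle_coe_sphere (x y : sphere (0 : E) 1) :
    angle (x : E) y = Real.arccos (inner ℝ (x : E) y) := by
  simp [angle]

lemma continuous_angle_sphere :
    Continuous fun p : sphere (0 : E) 1 × sphere (0 : E) 1 => angle (p.1 : E) p.2 := by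
  simp only [angle_coe_sphere]
  fun_prop

lemma continuous_angle_left_sphere (z : sphere (0 : E) 1) :
    Continuous fun x : sphere (0 : E) 1 => angle (x : E) z :=
  continuous_angle_sphere.comp (f := fun x => (x, z)) (by fun_prop)

lemma angle_self_sphere (x : sphere (0 : E) 1) : angle (x : E) x = 0 :=
  angle_self (ne_zero_of_mem_unit_sphere x)

lemma angle_sphereReflection (w : E) (x y : sphere (0 : E) 1) :
    angle (sphereReflection w x : E) (sphereReflection w y) = angle (x : E) y :=
  (ℝ ∙ w)ᗮ.reflection.toLinearIsometry.angle_map x y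

lemma angle_le_angle_sphereReflection (hx : x ∈ halfSphere w) (hy : y ∈ halfSphere w) :
    angle (x : E) y ≤ angle (sphereReflection w x : E) y := by
  have hxy : 0 ≤ inner ℝ (x : E) w / ‖w‖ ^ 2 * inner ℝ (y : E) w :=
    mul_nonneg (div_nonneg hx (sq_nonneg _)) hy
  rw [angle_coe_sphere, angle_coe_sphere]
  refine Real.arccos_le_arccos ?_
  rw [coe_sphereReflection, Submodule.reflection_orthogonal_apply,
    Submodule.reflection_singleton_apply, neg_sub, inner_sub_left, two_smul, inner_add_left,
    real_inner_smul_left, real_inner_comm _ w, real_inner_comm _ w]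
  simp only [RCLike.ofReal_real_eq_id, id]
  linarith

lemma sphereReflection_mem_sphericalCap (hz : z ∈ halfSphere w) (hx : x ∈ sphericalCap z r)
    (hxw : x ∉ halfSphere w) :
    sphereReflection w x ∈ sphericalCap z r := by
  have h := angle_le_angle_sphereReflection (sphereReflection_mem_halfSphere hxw) hz
  rw [involutive_sphereReflection w x] at h
  exact h.trans hx

lemma mem_halfSphere_sub_of_angle_le (h : angle (y : E) z ≤ angle (x : E) z) :
    z ∈ halfSphere ((y : E) - x) := by
  have hcos := Real.cos_le_cos_of_nonneg_of_le_pi (angle_nonneg _ _) (angle_le_pi _ _) h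
  simp only [cos_angle, norm_eq_of_mem_sphere, mul_one, div_one] at hcos
  simpa [halfSphere, inner_sub_right, real_inner_comm] using hcos

lemma isClosed_halfSphere (w : E) : IsClosed (halfSphere w) :=
  isClosed_le continuous_const (by fun_prop)

lemma isClosed_sphericalCap (z : sphere (0 : E) 1) (r : ℝ) : IsClosed (sphericalCap z r) :=
  isClosed_le (continuous_angle_left_sphere z) continuous_const

lemma isOpen_setOf_angle_lt (z : sphere (0 : E) 1) (r : ℝ) :
    IsOpen {x : sphere (0 : E) 1 | angle (x : E) z < r} :=
  isOpen_lt (continuous_angle_left_sphere z) continuous_const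

lemma exists_angle_eq_and_angle_eq_add (h₀ : 0 < angle (x : E) z)
    (hπ : angle (x : E) z < Real.pi) {s : ℝ} (hs : 0 ≤ s) (hsπ : angle (x : E) z + s ≤ Real.pi) :
    ∃ y : sphere (0 : E) 1, angle (y : E) z = s ∧ angle (x : E) y = angle (x : E) z + s := by
  set θ := angle (x : E) z
  have hθ : Real.sin θ ≠ 0 := (Real.sin_pos_of_pos_of_lt_pi h₀ hπ).ne'
  have hxz : inner ℝ (x : E) z = Real.cos θ := by simp [θ, cos_angle]
  have hxx : inner ℝ (x : E) x = 1 := by simp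
  have hzz : inner ℝ (z : E) z = 1 := by simp
  -- `y` is the point at distance `s` beyond `z` on the great circle from `x` through `z`.
  obtain ⟨y, hy⟩ : ∃ y : E,
      y = (Real.sin θ)⁻¹ • (Real.sin (θ + s) • (z : E) - Real.sin s • (x : E)) := ⟨_, rfl⟩
  have hyz : inner ℝ y z = Real.cos s := by
    simp only [hy, real_inner_smul_left, inner_sub_left, hxz, hzz, Real.sin_add]
    field_simp
    ring
  have hxy : inner ℝ (x : E) y = Real.cos (θ + s) := by
    simp only [hy, real_inner_smul_right, inner_sub_right, hxz, hxx, Real.sin_add, Real.cos_add]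
    field_simp
    linear_combination Real.sin s * Real.sin_sq_add_cos_sq θ
  have hyy : ‖y‖ = 1 := by
    rw [← pow_eq_one_iff_of_nonneg (norm_nonneg y) two_ne_zero, ← real_inner_self_eq_norm_sq]
    nth_rw 2 [hy]
    rw [real_inner_smul_right, inner_sub_right, real_inner_smul_right, real_inner_smul_right, hyz,
      real_inner_comm, hxy, Real.sin_add, Real.cos_add]
    field_simp
    linear_combination Real.sin θ * Real.sin_sq_add_cos_sq s
  refine ⟨⟨y, mem_sphere_zero_iff_norm.2 hyy⟩, ?_, ?_⟩
  · rw [angle_coe_sphere, hyz, Real.arccos_cos hs (by linarith)]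
  · rw [angle_coe_sphere, hxy, Real.arccos_cos (by linarith) hsπ]

lemma exists_angle_lt_and_lt_angle (hD₀ : 0 < D) (hDπ : D < Real.pi)
    (hx : D / 2 < angle (x : E) z) :
    ∃ y : sphere (0 : E) 1, angle (y : E) z < D / 2 ∧ D < angle (x : E) y := by
  rcases lt_or_ge D (angle (x : E) z) with hxD | hxD
  · exact ⟨z, (angle_self_sphere z).trans_lt (half_pos hD₀), hxD⟩
  obtain ⟨t, htD, ht⟩ : ∃ t, D < t ∧ t < min Real.pi (angle (x : E) z + D / 2) :=
    exists_between (lt_min hDπ (by linarith))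
  obtain ⟨htπ, htx⟩ := lt_min_iff.1 ht
  obtain ⟨y, hyz, hxy⟩ := exists_angle_eq_and_angle_eq_add (x := x) (z := z)
    (s := t - angle (x : E) z) (by linarith) (by linarith) (by linarith) (by linarith)
  exact ⟨y, by linarith, by linarith⟩

variable {A B K X : Set (sphere (0 : E) 1)}

lemma angle_le_of_mem_polarization (hK : ∀ x ∈ K, ∀ y ∈ K, angle (x : E) y ≤ D) :
    ∀ x ∈ polarization (sphereReflection w) (halfSphere w) K,
      ∀ y ∈ polarization (sphereReflection w) (halfSphere w) K, angle (x : E) y ≤ D :=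
  rel_of_mem_polarization (R := fun x y : sphere (0 : E) 1 => angle (x : E) y ≤ D)
    (fun x y h => (angle_comm (y : E) x).trans_le h)
    (fun x y h => (angle_sphereReflection w x y).ge.trans h)
    (fun _ hx _ hy h => (angle_le_angle_sphereReflection hx hy).trans h) hK

lemma angle_le_of_mem_closure (hX : ∀ x ∈ X, ∀ y ∈ X, angle (x : E) y ≤ D) :
    ∀ x ∈ closure X, ∀ y ∈ closure X, angle (x : E) y ≤ D := fun _ hx _ hy =>
  (isClosed_Iic (a := D)).closure_eq.subset (map_mem_closure₂
    (f := fun x y : sphere (0 : E) 1 => angle (x : E) y) continuous_angle_sphere hx hy hX)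

variable [MeasurableSpace E] {μ : Measure (sphere (0 : E) 1)}

lemma subset_sphericalCap_of_measure_sdiff_eq_zero [μ.IsOpenPosMeasure] (hD₀ : 0 < D)
    (hDπ : D < Real.pi) (hK : IsClosed K) (hKD : ∀ x ∈ K, ∀ y ∈ K, angle (x : E) y ≤ D)
    (h₀ : μ (sphericalCap z (D / 2) \ K) = 0) : K ⊆ sphericalCap z (D / 2) := by
  by_contra! hKC
  obtain ⟨x, hxK, hxC⟩ := not_subset.1 hKC
  obtain ⟨y, hyz, hxy⟩ := exists_angle_lt_and_lt_angle hD₀ hDπ (not_le.1 hxC)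
  have hyK : y ∈ K := by
    by_contra hyK
    refine ((isOpen_setOf_angle_lt z (D / 2)).sdiff hK).measure_ne_zero μ ⟨y, hyz, hyK⟩
      (measure_mono_null (sdiff_subset_sdiff_left ?_) h₀)
    exact fun p (hp : angle (p : E) z < D / 2) => hp.le
  exact (hKD x hxK y hyK).not_gt hxy

variable [BorelSpace E] [FiniteDimensional ℝ E]

lemma exists_measure_preimage_sphereReflection_sub_inter_ne_zero [IsFiniteMeasure μ]
    (hμ : ∀ w : E, MeasurePreserving (sphereReflection w) μ μ)
    (hA : MeasurableSet A) (hB : MeasurableSet B) (hA₀ : μ A ≠ 0) (hB₀ : μ B ≠ 0) :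
    ∃ x ∈ A, ∃ y ∈ B, μ (sphereReflection ((y : E) - x) ⁻¹' A ∩ B) ≠ 0 := by
  have hS : MeasurableSet (sphere (0 : E) 1) := isClosed_sphere.measurableSet
  obtain ⟨x, hxA, hx⟩ := exists_mem_eventually_half_mul_measure_closedBall_lt hS μ hA hA₀
  obtain ⟨y, hyB, hy⟩ := exists_mem_eventually_half_mul_measure_closedBall_lt hS μ hB hB₀
  obtain ⟨r, hxr, hyr⟩ := (hx.and hy).exists
  refine ⟨x, hxA, y, hyB, measure_preimage_inter_ne_zero_of_half_mul_lt (hμ _) hA hB ?_ hyr⟩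
  rwa [sphereReflection_sub]

lemma exists_measure_lt_measure_polarization_inter [IsFiniteMeasure μ]
    (hμ : ∀ w : E, MeasurePreserving (sphereReflection w) μ μ) (hK : IsClosed K)
    (hKC : μ (K \ sphericalCap z r) ≠ 0) (hCK : μ (sphericalCap z r \ K) ≠ 0) :
    ∃ w : E, μ K ≤ μ (polarization (sphereReflection w) (halfSphere w) K) ∧
      μ (K ∩ sphericalCap z r) <
        μ (polarization (sphereReflection w) (halfSphere w) K ∩ sphericalCap z r) := by
  have hKm := hK.measurableSet
  have hCm := (isClosed_sphericalCap z r).measurableSet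
  obtain ⟨x, hx, y, hy, hpos⟩ := exists_measure_preimage_sphereReflection_sub_inter_ne_zero hμ
    (hKm.diff hCm) (hCm.diff hKm) hKC hCK
  set w : E := y - x
  have hz : z ∈ halfSphere w := mem_halfSphere_sub_of_angle_le (hy.1.trans (not_le.1 hx.2).le)
  have hgain {C} := measure_inter_add_le_measure_polarization_inter (C := C)
    (involutive_sphereReflection w) (hμ w) (isClosed_halfSphere w).measurableSet
    (fun _ => sphereReflection_mem_halfSphere) hKm
  refine ⟨w, by simpa using hgain .univ fun _ _ _ => mem_univ _, ?_⟩
  exact (ENNReal.lt_add_right (measure_ne_top _ _) hpos).trans_le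
    (hgain hCm fun _ => sphereReflection_mem_sphericalCap hz)

lemma measure_le_measure_sphericalCap_of_isClosed [IsFiniteMeasure μ] [μ.IsOpenPosMeasure]
    (hμ : ∀ w : E, MeasurePreserving (sphereReflection w) μ μ)
    (hD₀ : 0 < D) (hDπ : D < Real.pi) (hX : IsClosed X)
    (hXD : ∀ x ∈ X, ∀ y ∈ X, angle (x : E) y ≤ D) : μ X ≤ μ (sphericalCap z (D / 2)) := by
  set C := sphericalCap z (D / 2)
  obtain ⟨K, hKD, hXK, hmax⟩ := exists_compacts_rel_forall_measure_inter_le μ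
    (R := fun x y : sphere (0 : E) 1 => angle (x : E) y ≤ D)
    (isClosed_le continuous_angle_sphere continuous_const) hX hXD
    (isClosed_sphericalCap z (D / 2)).measurableSet
  have hK : IsClosed (K : Set (sphere (0 : E) 1)) := K.isCompact.isClosed
  refine hXK.trans ?_
  by_cases hKC : μ (K \ C) = 0
  · exact measure_mono_ae (ae_le_set.2 hKC)
  by_cases hCK : μ (C \ K) = 0
  · exact measure_mono (subset_sphericalCap_of_measure_sdiff_eq_zero hD₀ hDπ hK hKD hCK)
  obtain ⟨w, hKP, hlt⟩ := exists_measure_lt_measure_polarization_inter hμ hK hKC hCK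
  have hP := isClosed_polarization (sphereReflection w).continuous (isClosed_halfSphere w) hK
  have hle := hmax ⟨_, hP.isCompact⟩ (angle_le_of_mem_polarization hKD) (hXK.trans hKP)
  exact absurd hlt hle.not_gt

theorem spherical_isodiametric_general
    (hμ : ∀ w : E, MeasurePreserving (sphereReflection w) μ μ) (hD₀ : 0 < D)
    (hDπ : D < Real.pi) (z : sphere (0 : E) 1)
    (hXD : ∀ x ∈ X, ∀ y ∈ X, angle (x : E) y ≤ D) : μ X ≤ μ (sphericalCap z (D / 2)) := by
  have hhom (x y : sphere (0 : E) 1) : ∃ f : sphere (0 : E) 1 → sphere (0 : E) 1,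
      Continuous f ∧ MeasurePreserving f μ μ ∧ f x = y :=
    ⟨_, (sphereReflection _).continuous, hμ _, sphereReflection_sub x y⟩
  by_contra! hlt
  have : IsFiniteMeasure μ := by
    refine isFiniteMeasure_of_homogeneous hhom (isOpen_setOf_angle_lt z (D / 2))
      ⟨z, (angle_self_sphere z).trans_lt (half_pos hD₀)⟩ (measure_ne_top_of_subset ?_ hlt.ne_top)
    exact fun x (hx : angle (x : E) z < D / 2) => hx.le
  have : μ.IsOpenPosMeasure :=
    isOpenPosMeasure_of_homogeneous hhom fun h => by simp [h] at hlt
  exact hlt.not_ge ((measure_mono subset_closure).trans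
    (measure_le_measure_sphericalCap_of_isClosed hμ hD₀ hDπ isClosed_closure
      (angle_le_of_mem_closure hXD)))

end Sphere

lemma gd_eq_angle {n : ℕ} (x y : Sph n) : gd x y = angle (x : Esp n) y :=
  (angle_coe_sphere x y).symm

lemma sphBall_eq_sphericalCap {n : ℕ} (z : Sph n) (r : ℝ) : sphBall z r = sphericalCap z r := by
  simp only [sphBall, sphericalCap, gd_eq_angle]

lemma gd_le_sphDiam {n : ℕ} {X : Set (Sph n)} {x y : Sph n} (hx : x ∈ X) (hy : y ∈ X) :
    gd x y ≤ sphDiam X := by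
  refine le_csSup ⟨Real.pi, ?_⟩ ⟨x, hx, y, hy, rfl⟩
  rintro _ ⟨p, -, q, -, rfl⟩
  exact Real.arccos_le_pi _

/-- spherical isodiametric inequality. -/
theorem spherical_isodiametric (n : ℕ) (hn : 2 ≤ n) (D : ℝ) (hD0 : 0 < D)
    (hD1 : D < Real.pi) (z : Sph n) (X : Set (Sph n)) (hX : MeasurableSet X)
    (hdiam : sphDiam X ≤ D) :
    sphVol n X ≤ sphVol n (sphBall z (D / 2)) := by
  rw [sphBall_eq_sphericalCap]
  exact spherical_isodiametric_general
    (fun w => (sphereReflection w).measurePreserving_hausdorffMeasure _) hD0 hD1 z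
    fun x hx y hy => (gd_eq_angle x y).ge.trans ((gd_le_sphDiam hx hy).trans hdiam)
end
end

section
/- Let n ≥ 2 and D > 0. If X ⊆ 𝔹^n is a Borel measurable set with hyperbolic diameter diam_H X ≤ D, then μ_H(X) ≤ μ_H({x ∈ ℝ^n : ‖x‖ ≤ tanh(D/2)}); here {x : ‖x‖ ≤ tanh(D/2)} is the hyperbolic closed ball of radius D/2 centered at the origin. -/
open MeasureTheory

noncomputable section

/-- Euclidean space `ℝ^n`. -/
abbrev Fsp (n : ℕ) : Type := EuclideanSpace ℝ (Fin n)

/-- The inverse hyperbolic cosine `arcosh x = log (x + √(x² − 1))`. -/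
def arcosh (x : ℝ) : ℝ := Real.log (x + Real.sqrt (x ^ 2 - 1))

/-- Hyperbolic distance in the Klein model on the open unit ball of `ℝ^n`:
`d_H(x,y) = arcosh ((1 − ⟨x,y⟩)/√((1 − ‖x‖²)(1 − ‖y‖²)))`. -/
def hypDist {n : ℕ} (x y : Fsp n) : ℝ :=
  arcosh ((1 - inner (𝕜 := ℝ) x y) / Real.sqrt ((1 - ‖x‖ ^ 2) * (1 - ‖y‖ ^ 2)))

/-- Hyperbolic volume in the Klein model: density `(1 − ‖x‖²)^{−(n+1)/2}`
with respect to Lebesgue measure. -/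
def hypVol (n : ℕ) : Measure (Fsp n) :=
  (volume : Measure (Fsp n)).withDensity fun x =>
    ENNReal.ofReal ((1 - ‖x‖ ^ 2) ^ (-(((n : ℝ) + 1) / 2)))

/-!
On the hyperboloid `x₀² - ‖x‖² = 1`, the orbits of the boosts along an axis are the curves
equidistant from it, parametrized by the signed position `t` of the foot of the perpendicular. For
two such curves, `cosh d = ρ₁ ρ₂ cosh (t₁ - t₂) - ⟪p₁, p₂⟫` where `ρᵢ > 0` and `pᵢ` are constants,
so distances increase with `|t₁ - t₂|`. Replace the trace of `X` on every orbit by the centred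
interval of the same length in `t`. Two centred intervals have the least supremum of `|t₁ - t₂|`
among pairs of sets of given lengths, so the diameter does not increase, and boosts preserve the
hyperbolic volume, so by Tonelli the volume does not change. The new set is invariant under the
reflection `t ↦ -t` and keeps the reflection symmetries that `X` had in orthogonal directions.
After all axes of an orthonormal basis have been treated, the set is invariant under `x ↦ -x`.
Then `2 d(x, 0) = d(x, -x) ≤ D` for all of its points: the set lies in the ball of radius `D / 2`.

Passing to the closure beforehand changes no diameter and makes every set measurable. The Klein
model is the image of the hyperboloid under the central projection `(x₀, x) ↦ x / x₀`, which is
`OpenPartialHomeomorph.univUnitBall`.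
-/

open Set Metric Module
open scoped ENNReal RealInnerProductSpace

/-! ### Rearrangement of subsets of the line -/

section Rearrangement

lemma volume_setOf_ofReal_two_mul_abs_lt (m : ℝ≥0∞) :
    volume {t : ℝ | ENNReal.ofReal (2 * |t|) < m} = m := by
  induction m with
  | top => simp [ENNReal.mul_lt_top_iff]
  | coe m =>
    have h : {t : ℝ | ENNReal.ofReal (2 * |t|) < m} = Ioo (-(m / 2 : ℝ)) (m / 2) := by
      ext t
      rw [mem_ofPred_eq, ENNReal.ofReal_lt_coe_iff (by positivity), mem_Ioo, ← abs_lt,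
        lt_div_iff₀' two_pos]
    rw [h, Real.volume_Ioo, sub_neg_eq_add, add_halves, ENNReal.ofReal_coe_nnreal]

lemma volume_add_volume_le_of_abs_sub_le {A B : Set ℝ} (hA : A.Nonempty) (hB : B.Nonempty) {L : ℝ}
    (h : ∀ a ∈ A, ∀ b ∈ B, |a - b| ≤ L) : volume A + volume B ≤ ENNReal.ofReal (2 * L) := by
  obtain ⟨a₀, ha₀⟩ := hA
  have hB_above : BddAbove B := ⟨a₀ + L, fun b hb => by linarith [(abs_le.1 (h a₀ ha₀ b hb)).1]⟩
  have hB_below : BddBelow B := ⟨a₀ - L, fun b hb => by linarith [(abs_le.1 (h a₀ ha₀ b hb)).2]⟩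
  have hB_sub : B ⊆ Icc (sInf B) (sSup B) := subset_Icc_csInf_csSup hB_below hB_above
  have hA_sub : A ⊆ Icc (sSup B - L) (sInf B + L) := fun a ha => by
    have hsup : sSup B ≤ a + L := csSup_le hB fun b hb => by linarith [(abs_le.1 (h a ha b hb)).1]
    have hinf : a - L ≤ sInf B := le_csInf hB fun b hb => by linarith [(abs_le.1 (h a ha b hb)).2]
    constructor <;> linarith
  calc volume A + volume B
      ≤ volume (Icc (sSup B - L) (sInf B + L)) + volume (Icc (sInf B) (sSup B)) := by gcongr
    _ = ENNReal.ofReal (2 * L) := by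
      obtain ⟨hl, hr⟩ := hA_sub ha₀
      rw [Real.volume_Icc, Real.volume_Icc, ← ENNReal.ofReal_add (sub_nonneg.2 (hl.trans hr))
        (sub_nonneg.2 (nonempty_Icc.1 (hB.mono hB_sub)))]
      ring_nf

lemma exists_abs_sub_le_of_volume_lt {A B : Set ℝ} {s t : ℝ}
    (hs : ENNReal.ofReal (2 * |s|) < volume A) (ht : ENNReal.ofReal (2 * |t|) < volume B) :
    ∃ a ∈ A, ∃ b ∈ B, |s - t| ≤ |a - b| := by
  by_contra! h
  refine (ENNReal.add_lt_add hs ht).not_ge ?_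
  calc volume A + volume B
      ≤ ENNReal.ofReal (2 * |s - t|) := volume_add_volume_le_of_abs_sub_le
        (nonempty_of_measure_ne_zero hs.ne_bot) (nonempty_of_measure_ne_zero ht.ne_bot)
        fun a ha b hb => (h a ha b hb).le
    _ ≤ ENNReal.ofReal (2 * |s| + 2 * |t|) := by
      rw [← mul_add]
      gcongr
      exact abs_sub s t
    _ = ENNReal.ofReal (2 * |s|) + ENNReal.ofReal (2 * |t|) :=
      ENNReal.ofReal_add (by positivity) (by positivity)

end Rearrangement

/-! ### Symmetrization along a flow -/

section FlowSymmetrization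

variable {α : Type*} [TopologicalSpace α] {φ : Flow ℝ α} {τ : α → ℝ} {X : Set α}

/-- The times at which the orbit of `x` under `φ` meets `X`, as read on a clock `τ`, that is, a
function with `τ (φ t x) = τ x + t`. It depends only on the orbit of `x`. -/
def orbitSlice (φ : Flow ℝ α) (τ : α → ℝ) (X : Set α) (x : α) : Set ℝ :=
  {s | φ (s - τ x) x ∈ X}

/-- Steiner symmetrization along the flow `φ` with clock `τ`: the intersection of `X` with each
orbit is replaced by the time interval of the same length centred at `0`. The interval is open, so
that orbits which miss `X` stay empty. -/
def symmetrize (φ : Flow ℝ α) (τ : α → ℝ) (X : Set α) : Set α :=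
  {x | ENNReal.ofReal (2 * |τ x|) < volume (orbitSlice φ τ X x)}

lemma orbitSlice_flow (hτ : ∀ t x, τ (φ t x) = τ x + t) (t : ℝ) (x : α) :
    orbitSlice φ τ X (φ t x) = orbitSlice φ τ X x := by
  ext s
  simp only [orbitSlice, mem_ofPred_eq, hτ, ← φ.map_add]
  ring_nf

lemma volume_orbitSlice (x : α) : volume (orbitSlice φ τ X x) = volume {s | φ s x ∈ X} := by
  simpa only [orbitSlice, preimage_ofPred_eq, sub_eq_add_neg] using
    measure_preimage_add_right volume (-τ x) {s | φ s x ∈ X}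

lemma orbitSlice_symmetrize (hτ : ∀ t x, τ (φ t x) = τ x + t) (x : α) :
    orbitSlice φ τ (symmetrize φ τ X) x =
      {s | ENNReal.ofReal (2 * |s|) < volume (orbitSlice φ τ X x)} := by
  ext s
  simp only [orbitSlice, symmetrize, mem_ofPred_eq, hτ, ← φ.map_add]
  ring_nf

lemma exists_abs_sub_le_of_mem_symmetrize {x y : α} (hx : x ∈ symmetrize φ τ X)
    (hy : y ∈ symmetrize φ τ X) :
    ∃ s t, φ s x ∈ X ∧ φ t y ∈ X ∧ |τ x - τ y| ≤ |τ x + s - (τ y + t)| := by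
  obtain ⟨a, ha, b, hb, hab⟩ := exists_abs_sub_le_of_volume_lt hx hy
  exact ⟨a - τ x, b - τ y, ha, hb, by simpa using hab⟩

lemma mapsTo_reverse_symmetrize (hτ : ∀ t x, τ (φ t x) = τ x + t) :
    MapsTo (fun x => φ (-(2 * τ x)) x) (symmetrize φ τ X) (symmetrize φ τ X) := by
  intro x hx
  have hτx : τ (φ (-(2 * τ x)) x) = -τ x := by rw [hτ]; ring
  simpa only [symmetrize, mem_ofPred_eq, orbitSlice_flow hτ, hτx, abs_neg] using hx

lemma mapsTo_symmetrize {g : α → α} (hφg : ∀ t x, φ t (g x) = g (φ t x))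
    (hτg : ∀ x, τ (g x) = τ x) (hg : MapsTo g X X) :
    MapsTo g (symmetrize φ τ X) (symmetrize φ τ X) := by
  intro x hx
  have hsub : orbitSlice φ τ X x ⊆ orbitSlice φ τ X (g x) := fun s hs => by
    simpa only [orbitSlice, mem_ofPred_eq, hτg, hφg] using hg hs
  rw [symmetrize, mem_ofPred_eq, hτg]
  exact hx.trans_le (measure_mono hsub)

variable [SecondCountableTopology α] [MeasurableSpace α] [BorelSpace α]

lemma measurable_volume_orbitSlice (φ : Flow ℝ α) (hτ : Measurable τ) (hX : MeasurableSet X) :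
    Measurable fun x => volume (orbitSlice φ τ X x) := by
  have hφ : Measurable fun p : α × ℝ => φ (p.2 - τ p.1) p.1 :=
    φ.cont'.measurable.comp (by fun_prop : Measurable fun p : α × ℝ => (p.2 - τ p.1, p.1))
  exact measurable_measure_prodMk_left (hφ hX)

lemma measurableSet_symmetrize (φ : Flow ℝ α) (hτ : Measurable τ) (hX : MeasurableSet X) :
    MeasurableSet (symmetrize φ τ X) :=
  measurableSet_lt (by fun_prop) (measurable_volume_orbitSlice φ hτ hX)

/-- By Tonelli, since `(s, x) ↦ (s, φ s x)` preserves the product measure: count the pairs with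
`φ s x ∈ X` and `τ x ∈ [0, 1)`. -/
lemma measure_eq_setLIntegral_volume_orbitSlice {μ : Measure α} [SFinite μ] (hτ : Measurable τ)
    (hτφ : ∀ t x, τ (φ t x) = τ x + t) (hφ : ∀ t, MeasurePreserving (φ t) μ μ)
    (hX : MeasurableSet X) :
    μ X = ∫⁻ x in τ ⁻¹' Ico 0 1, volume (orbitSlice φ τ X x) ∂μ := by
  have hskew : MeasurePreserving (fun p : ℝ × α => (p.1, φ p.1 p.2)) (volume.prod μ)
      (volume.prod μ) :=
    (MeasurePreserving.id volume).skew_product φ.cont'.measurable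
      (.of_forall fun t => (hφ t).map_eq)
  set W : Set (ℝ × α) := {p | p.2 ∈ X ∧ τ p.2 - p.1 ∈ Ico 0 1}
  have hW : MeasurableSet W := (measurable_snd hX).inter
    ((by fun_prop : Measurable fun p : ℝ × α => τ p.2 - p.1) measurableSet_Ico)
  have htime : ∀ x ∈ X, volume ((fun s => (s, x)) ⁻¹' W) = 1 := fun x hx => by
    have : (fun s => (s, x)) ⁻¹' W = Ioc (τ x - 1) (τ x) := by
      ext s
      simp only [W, mem_preimage, mem_ofPred_eq, hx, true_and, mem_Ico, mem_Ioc]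
      constructor <;> rintro ⟨h₀, h₁⟩ <;> constructor <;> linarith
    simp [this]
  have hspace : ∀ x, volume ((fun s => (s, x)) ⁻¹' ((fun p : ℝ × α => (p.1, φ p.1 p.2)) ⁻¹' W)) =
      (τ ⁻¹' Ico 0 1).indicator (fun x => volume (orbitSlice φ τ X x)) x := fun x => by
    simp only [W, preimage_ofPred_eq, hτφ, add_sub_cancel_right]
    by_cases hx : τ x ∈ Ico 0 1 <;> simp [hx, volume_orbitSlice, indicator]
  calc μ X = ∫⁻ x, volume ((fun s => (s, x)) ⁻¹' W) ∂μ := by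
        rw [← lintegral_indicator_one hX]
        refine lintegral_congr fun x => ?_
        by_cases hx : x ∈ X
        · simp [hx, htime x hx]
        · simp [hx, W]
    _ = volume.prod μ ((fun p : ℝ × α => (p.1, φ p.1 p.2)) ⁻¹' W) := by
        rw [hskew.measure_preimage hW.nullMeasurableSet, Measure.prod_apply_symm hW]
    _ = ∫⁻ x in τ ⁻¹' Ico 0 1, volume (orbitSlice φ τ X x) ∂μ := by
        rw [Measure.prod_apply_symm (hskew.measurable hW),
          ← lintegral_indicator (hτ measurableSet_Ico)]
        exact lintegral_congr hspace

lemma measure_symmetrize {μ : Measure α} [SFinite μ] (hτ : Measurable τ)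
    (hτφ : ∀ t x, τ (φ t x) = τ x + t) (hφ : ∀ t, MeasurePreserving (φ t) μ μ)
    (hX : MeasurableSet X) : μ (symmetrize φ τ X) = μ X := by
  rw [measure_eq_setLIntegral_volume_orbitSlice hτ hτφ hφ (measurableSet_symmetrize φ hτ hX),
    measure_eq_setLIntegral_volume_orbitSlice hτ hτφ hφ hX]
  simp only [orbitSlice_symmetrize hτφ, volume_setOf_ofReal_two_mul_abs_lt]

end FlowSymmetrization

/-! ### Change of variables -/

section ChangeOfVariables

variable {E : Type*} [NormedAddCommGroup E] [NormedSpace ℝ E] [FiniteDimensional ℝ E]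

lemma det_id_add_smulRight (f : E →L[ℝ] ℝ) (v : E) :
    (ContinuousLinearMap.id ℝ E + f.smulRight v).det = 1 + f v :=
  LinearMap.transvection.det (f : E →ₗ[ℝ] ℝ) v

lemma map_withDensity_eq_restrict_range [MeasurableSpace E] [BorelSpace E] (μ : Measure E)
    [μ.IsAddHaarMeasure] {f : E → E} {f' : E → E →L[ℝ] E} (hf : ∀ x, HasFDerivAt f (f' x) x)
    (hf_inj : f.Injective) {v w : E → ℝ≥0∞}
    (hvw : ∀ x, ENNReal.ofReal |(f' x).det| * w (f x) = v x) :
    (μ.withDensity v).map f = (μ.withDensity w).restrict (range f) := by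
  have hf_meas : Measurable f :=
    (continuous_iff_continuousAt.2 fun x => (hf x).continuousAt).measurable
  have h_range : MeasurableSet (range f) :=
    (hf_meas.measurableEmbedding hf_inj).measurableSet_range
  ext s hs
  rw [Measure.map_apply hf_meas hs, withDensity_apply _ (hf_meas hs), Measure.restrict_apply hs,
    withDensity_apply _ (hs.inter h_range), ← image_preimage_eq_inter_range,
    lintegral_image_eq_lintegral_abs_det_fderiv_mul μ (hf_meas hs)
      (fun x _ => (hf x).hasFDerivWithinAt) hf_inj.injOn]
  simp only [hvw]

end ChangeOfVariables

/-! ### The hyperboloid -/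

section Hyperboloid

variable {E : Type*} [NormedAddCommGroup E]

/-- The coordinate `x₀ = √(1 + ‖x‖²)` of the point `(x₀, x)` of the hyperboloid `x₀² - ‖x‖² = 1`,
`x₀ > 0`. Points of the hyperboloid are represented by their component `x` throughout. -/
def height (x : E) : ℝ := √(1 + ‖x‖ ^ 2)

lemma height_sq (x : E) : height x ^ 2 = 1 + ‖x‖ ^ 2 := Real.sq_sqrt (by positivity)

lemma height_pos (x : E) : 0 < height x := Real.sqrt_pos.2 (by positivity)

lemma height_eq_of_norm_eq {x y : E} (h : ‖x‖ = ‖y‖) : height x = height y := by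
  rw [height, height, h]

@[fun_prop]
lemma continuous_height : Continuous (height : E → ℝ) := by
  unfold height
  fun_prop

variable [InnerProductSpace ℝ E]

/-- The hyperbolic cosine `x₀ y₀ - ⟪x, y⟫` of the hyperbolic distance between two points of the
hyperboloid. -/
def coshDist (x y : E) : ℝ := height x * height y - ⟪x, y⟫

lemma hasFDerivAt_height (x : E) : HasFDerivAt height ((height x)⁻¹ • innerSL ℝ x) x := by
  have h := ((hasStrictFDerivAt_norm_sq x).hasFDerivAt.const_add 1).sqrt
    (by positivity : 1 + ‖x‖ ^ 2 ≠ 0)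
  refine h.congr_fderiv ?_
  ext v
  simp only [height, smul_apply, innerSL_apply_apply, nsmul_eq_mul, Nat.cast_ofNat, smul_eq_mul]
  field_simp

lemma one_le_coshDist (x y : E) : 1 ≤ coshDist x y := by
  have h : 1 + ⟪x, y⟫ ≤ height x * height y := by
    refine le_trans (b := 1 + ‖x‖ * ‖y‖) (by gcongr; exact real_inner_le_norm x y) ?_
    refine le_of_sq_le_sq ?_ (mul_pos (height_pos x) (height_pos y)).le
    rw [mul_pow, height_sq, height_sq]
    linarith [sq_nonneg (‖x‖ - ‖y‖)]
  rw [coshDist]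
  linarith

lemma coshDist_neg_right_self (x : E) : coshDist x (-x) = 2 * height x ^ 2 - 1 := by
  rw [coshDist, height_eq_of_norm_eq (norm_neg x), inner_neg_right, real_inner_self_eq_norm_sq,
    ← sq]
  linarith [height_sq x]

lemma coshDist_le_of_mem_closure {X : Set E} {C : ℝ} (hX : ∀ x ∈ X, ∀ y ∈ X, coshDist x y ≤ C) :
    ∀ x ∈ closure X, ∀ y ∈ closure X, coshDist x y ≤ C := by
  have h_closed : IsClosed {p : E × E | coshDist p.1 p.2 ≤ C} := by
    unfold coshDist
    exact isClosed_le (by fun_prop) continuous_const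
  intro x hx y hy
  have hxy : (x, y) ∈ closure (X ×ˢ X) := by
    rw [closure_prod_eq]
    exact ⟨hx, hy⟩
  exact closure_minimal (fun p hp => hX _ hp.1 _ hp.2) h_closed hxy

/-- The hyperbolic volume `dx / x₀` on the hyperboloid. -/
def hyperboloidVol (E : Type*) [NormedAddCommGroup E] [InnerProductSpace ℝ E]
    [FiniteDimensional ℝ E] [MeasurableSpace E] [BorelSpace E] : Measure E :=
  volume.withDensity fun x => ENNReal.ofReal (height x)⁻¹

instance [FiniteDimensional ℝ E] [MeasurableSpace E] [BorelSpace E] :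
    SFinite (hyperboloidVol E) := by
  unfold hyperboloidVol
  infer_instance

end Hyperboloid

/-! ### Translations along an axis -/

section Translation

variable {E : Type*} [NormedAddCommGroup E] [InnerProductSpace ℝ E] {e : E}

/-- The component of `x` orthogonal to the unit vector `e`. -/
def perp (e x : E) : E := x - ⟪e, x⟫ • e

/-- The hyperbolic cosine of the distance from `x` to the axis in the direction of the unit
vector `e`. -/
def coshAxisDist (e x : E) : ℝ := height (perp e x)

/-- The signed distance from the origin to the foot of the perpendicular from `x` to the axis in the
direction of the unit vector `e`. -/
def axisCoord (e x : E) : ℝ := Real.arsinh (⟪e, x⟫ / coshAxisDist e x)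

/-- The hyperbolic translation by `t` along the axis in the direction of the unit vector `e`: the
Lorentz boost which acts on the coordinates `(x₀, ⟪e, x⟫)` by the matrix with rows
`(cosh t, sinh t)` and `(sinh t, cosh t)`. -/
def boost (e : E) (t : ℝ) (x : E) : E :=
  x + ((Real.cosh t - 1) * ⟪e, x⟫ + Real.sinh t * height x) • e

lemma coshAxisDist_pos (e x : E) : 0 < coshAxisDist e x := height_pos _

lemma continuous_axisCoord (e : E) : Continuous (axisCoord e) := by
  unfold axisCoord coshAxisDist perp
  exact ((by fun_prop : Continuous fun x : E => ⟪e, x⟫).div (by fun_prop)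
    fun x => (height_pos _).ne').arsinh

lemma inner_eq_coshAxisDist_mul_sinh (e x : E) :
    ⟪e, x⟫ = coshAxisDist e x * Real.sinh (axisCoord e x) := by
  rw [axisCoord, Real.sinh_arsinh, mul_div_cancel₀ _ (coshAxisDist_pos e x).ne']

lemma perp_add_smul (he : ‖e‖ = 1) (x : E) (c : ℝ) : perp e (x + c • e) = perp e x := by
  rw [perp, inner_add_right, inner_smul_right, real_inner_self_eq_norm_sq, he, perp]
  module

lemma inner_perp_right (he : ‖e‖ = 1) (x : E) : ⟪e, perp e x⟫ = 0 := by
  rw [perp, inner_sub_right, inner_smul_right, real_inner_self_eq_norm_sq, he]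
  ring

lemma inner_eq_inner_perp_add (he : ‖e‖ = 1) (x y : E) :
    ⟪x, y⟫ = ⟪perp e x, perp e y⟫ + ⟪e, x⟫ * ⟪e, y⟫ := by
  rw [perp, inner_sub_left, inner_smul_left, inner_perp_right he, perp, inner_sub_right,
    inner_smul_right, real_inner_comm e x, conj_trivial]
  ring

lemma height_eq_coshAxisDist_mul_cosh (he : ‖e‖ = 1) (x : E) :
    height x = coshAxisDist e x * Real.cosh (axisCoord e x) := by
  have hρ := coshAxisDist_pos e x
  refine (sq_eq_sq₀ (height_pos x).le (mul_pos hρ (Real.cosh_pos _)).le).1 ?_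
  rw [mul_pow, Real.cosh_sq, mul_add, ← mul_pow, ← inner_eq_coshAxisDist_mul_sinh, coshAxisDist,
    height_sq, height_sq, ← real_inner_self_eq_norm_sq x, ← real_inner_self_eq_norm_sq (perp e x),
    inner_eq_inner_perp_add he x x]
  ring

lemma coshDist_eq_of_axisCoord (he : ‖e‖ = 1) (x y : E) :
    coshDist x y = coshAxisDist e x * coshAxisDist e y * Real.cosh (axisCoord e x - axisCoord e y)
      - ⟪perp e x, perp e y⟫ := by
  rw [coshDist, inner_eq_inner_perp_add he, height_eq_coshAxisDist_mul_cosh he,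
    height_eq_coshAxisDist_mul_cosh he y, inner_eq_coshAxisDist_mul_sinh e x,
    inner_eq_coshAxisDist_mul_sinh e y, Real.cosh_sub]
  ring

lemma boost_eq_perp_add (he : ‖e‖ = 1) (t : ℝ) (x : E) :
    boost e t x = perp e x + (coshAxisDist e x * Real.sinh (axisCoord e x + t)) • e := by
  have h : (Real.cosh t - 1) * ⟪e, x⟫ + Real.sinh t * height x =
      coshAxisDist e x * Real.sinh (axisCoord e x + t) - ⟪e, x⟫ := by
    rw [height_eq_coshAxisDist_mul_cosh he, inner_eq_coshAxisDist_mul_sinh e x, Real.sinh_add]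
    ring
  rw [boost, h, perp]
  module

lemma perp_boost (he : ‖e‖ = 1) (t : ℝ) (x : E) : perp e (boost e t x) = perp e x :=
  perp_add_smul he x _

lemma coshAxisDist_boost (he : ‖e‖ = 1) (t : ℝ) (x : E) :
    coshAxisDist e (boost e t x) = coshAxisDist e x := by
  rw [coshAxisDist, perp_boost he, coshAxisDist]

lemma axisCoord_boost (he : ‖e‖ = 1) (t : ℝ) (x : E) :
    axisCoord e (boost e t x) = axisCoord e x + t := by
  have h : ⟪e, boost e t x⟫ = coshAxisDist e x * Real.sinh (axisCoord e x + t) := by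
    rw [boost_eq_perp_add he, inner_add_right, inner_perp_right he, inner_smul_right,
      real_inner_self_eq_norm_sq, he]
    ring
  rw [axisCoord, coshAxisDist_boost he, h, mul_div_cancel_left₀ _ (coshAxisDist_pos e x).ne',
    Real.arsinh_sinh]

lemma height_boost (he : ‖e‖ = 1) (t : ℝ) (x : E) :
    height (boost e t x) = Real.cosh t * height x + Real.sinh t * ⟪e, x⟫ := by
  rw [height_eq_coshAxisDist_mul_cosh he, coshAxisDist_boost he, axisCoord_boost he,
    height_eq_coshAxisDist_mul_cosh he x, inner_eq_coshAxisDist_mul_sinh e x, Real.cosh_add]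
  ring

/-- The translations along the axis in the direction of the unit vector `e`, as a flow. -/
def boostFlow (he : ‖e‖ = 1) : Flow ℝ E where
  toFun := boost e
  cont' := by
    unfold Function.uncurry boost
    fun_prop
  map_add' s t x := by
    rw [boost_eq_perp_add he, boost_eq_perp_add he s, perp_boost he,
      coshAxisDist_boost he, axisCoord_boost he, add_comm s, add_assoc]
  map_zero' x := by simp [boost]

lemma coshDist_le_coshDist_boost (he : ‖e‖ = 1) {x y : E} {s t : ℝ}
    (h : |axisCoord e x - axisCoord e y| ≤ |axisCoord e x + s - (axisCoord e y + t)|) :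
    coshDist x y ≤ coshDist (boost e s x) (boost e t y) := by
  have hx := coshAxisDist_pos e x
  have hy := coshAxisDist_pos e y
  simp only [coshDist_eq_of_axisCoord he, perp_boost he, coshAxisDist_boost he,
    axisCoord_boost he]
  gcongr ?_ * _ * ?_ - _
  exact Real.cosh_le_cosh.2 h

lemma reflection_eq_boost (he : ‖e‖ = 1) (x : E) :
    (ℝ ∙ e)ᗮ.reflection x = boost e (-(2 * axisCoord e x)) x := by
  have h : axisCoord e x + -(2 * axisCoord e x) = -axisCoord e x := by ring
  rw [Submodule.reflection_orthogonal_apply, Submodule.reflection_singleton_apply,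
    boost_eq_perp_add he, h, Real.sinh_neg, mul_neg, ← inner_eq_coshAxisDist_mul_sinh, perp, he]
  simp only [RCLike.ofReal_one, one_pow, div_one]
  module

section FixedDirection

variable (L : E →ₗᵢ[ℝ] E)

lemma inner_map_eq_of_map_eq_self (hL : L e = e) (x : E) : ⟪e, L x⟫ = ⟪e, x⟫ := by
  rw [← L.inner_map_map e x, hL]

lemma axisCoord_map_of_map_eq_self (hL : L e = e) (x : E) : axisCoord e (L x) = axisCoord e x := by
  have h : coshAxisDist e (L x) = coshAxisDist e x := by
    have hperp : perp e (L x) = L (perp e x) := by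
      rw [perp, inner_map_eq_of_map_eq_self L hL, perp, map_sub, map_smul, hL]
    rw [coshAxisDist, hperp, height_eq_of_norm_eq (L.norm_map _), coshAxisDist]
  rw [axisCoord, h, inner_map_eq_of_map_eq_self L hL, axisCoord]

lemma boost_map_of_map_eq_self (hL : L e = e) (t : ℝ) (x : E) :
    boost e t (L x) = L (boost e t x) := by
  rw [boost, inner_map_eq_of_map_eq_self L hL, height_eq_of_norm_eq (L.norm_map x), boost,
    map_add, map_smul, hL]

end FixedDirection

variable [FiniteDimensional ℝ E] [MeasurableSpace E] [BorelSpace E]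

/-- The Jacobian of `boost e t` at `x` is `height (boost e t x) / height x`. -/
lemma measurePreserving_boost (he : ‖e‖ = 1) (t : ℝ) :
    MeasurePreserving (boost e t) (hyperboloidVol E) (hyperboloidVol E) := by
  have hderiv (x : E) : HasFDerivAt (boost e t) (ContinuousLinearMap.id ℝ E +
      ((Real.cosh t - 1) • innerSL ℝ e +
        Real.sinh t • (height x)⁻¹ • innerSL ℝ x).smulRight e) x :=
    (hasFDerivAt_id x).add ((((innerSL ℝ e).hasFDerivAt.const_mul (Real.cosh t - 1)).add
      ((hasFDerivAt_height x).const_mul (Real.sinh t))).smul_const e)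
  have hcancel (s : ℝ) (x : E) : boost e (-s) (boost e s x) = x := by
    change boostFlow he (-s) (boostFlow he s x) = x
    rw [← Flow.map_add, neg_add_cancel, Flow.map_zero_apply]
  have hsurj : (boost e t).Surjective := fun x =>
    ⟨boost e (-t) x, by simpa only [neg_neg] using hcancel (-t) x⟩
  refine ⟨((boostFlow he).continuous_toFun t).measurable, ?_⟩
  unfold hyperboloidVol
  rw [map_withDensity_eq_restrict_range volume hderiv (Function.LeftInverse.injective (hcancel t))
    (w := fun x => ENNReal.ofReal (height x)⁻¹) fun x => ?_, hsurj.range_eq, Measure.restrict_univ]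
  have hx := height_pos x
  have hx' := height_pos (boost e t x)
  have hdet : 1 + ((Real.cosh t - 1) • innerSL ℝ e + Real.sinh t • (height x)⁻¹ • innerSL ℝ x) e =
      height (boost e t x) * (height x)⁻¹ := by
    simp only [add_apply, smul_apply, innerSL_apply_apply,
      real_inner_self_eq_norm_sq, he, smul_eq_mul, height_boost he, real_inner_comm e x]
    field_simp
    ring
  rw [det_id_add_smulRight, hdet, ← ENNReal.ofReal_mul (abs_nonneg _), abs_of_pos (by positivity)]
  congr 1
  field_simp

end Translation

/-! ### The isodiametric inequality on the hyperboloid -/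

section Isodiametric

variable {ι E : Type*} [Fintype ι] [NormedAddCommGroup E] [InnerProductSpace ℝ E]

lemma neg_mem_of_mapsTo_reflection (b : OrthonormalBasis ι ℝ E) {X : Set E}
    (hX : ∀ i, MapsTo (ℝ ∙ b i)ᗮ.reflection X X) {x : E} (hx : x ∈ X) : -x ∈ X := by
  classical
  have h_partial (s : Finset ι) : x - (2 : ℝ) • ∑ i ∈ s, ⟪b i, x⟫ • b i ∈ X := by
    induction s using Finset.induction_on with
    | empty => simpa using hx
    | insert i s hi ih =>
      have h_inner : ⟪b i, ∑ j ∈ s, ⟪b j, x⟫ • b j⟫ = 0 := by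
        rw [inner_sum]
        refine Finset.sum_eq_zero fun j hj => ?_
        rw [inner_smul_right, b.inner_eq_zero (ne_of_mem_of_not_mem hj hi).symm, mul_zero]
      convert hX i ih using 1
      rw [Submodule.reflection_orthogonal_apply, Submodule.reflection_singleton_apply,
        b.norm_eq_one, inner_sub_right, inner_smul_right, h_inner, Finset.sum_insert hi]
      simp only [RCLike.ofReal_one, one_pow, div_one, mul_zero, sub_zero]
      module
  have h_neg : x - (2 : ℝ) • x = -x := by module
  simpa only [b.sum_repr', h_neg] using h_partial Finset.univ

variable [FiniteDimensional ℝ E] [MeasurableSpace E] [BorelSpace E] {C : ℝ}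

/-- Symmetrizing along one axis of the basis preserves the symmetries already obtained along the
others. -/
lemma exists_mapsTo_reflection_of_coshDist_le (b : OrthonormalBasis ι ℝ E) (s : Finset ι)
    {X : Set E} (hX : MeasurableSet X) (hC : ∀ x ∈ X, ∀ y ∈ X, coshDist x y ≤ C) :
    ∃ Y, MeasurableSet Y ∧ (∀ x ∈ Y, ∀ y ∈ Y, coshDist x y ≤ C) ∧
      hyperboloidVol E Y = hyperboloidVol E X ∧ ∀ i ∈ s, MapsTo (ℝ ∙ b i)ᗮ.reflection Y Y := by
  classical
  induction s using Finset.induction_on with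
  | empty => exact ⟨X, hX, hC, rfl, by simp⟩
  | insert i s hi ih =>
    obtain ⟨Y, hY, hYC, hY_vol, hY_refl⟩ := ih
    have he : ‖b i‖ = 1 := b.norm_eq_one i
    have hτ := (continuous_axisCoord (b i)).measurable
    refine ⟨symmetrize (boostFlow he) (axisCoord (b i)) Y, measurableSet_symmetrize _ hτ hY,
      fun x hx y hy => ?_, ?_, fun j hj => ?_⟩
    · obtain ⟨s, t, hs, ht, hst⟩ := exists_abs_sub_le_of_mem_symmetrize hx hy
      exact (coshDist_le_coshDist_boost he hst).trans (hYC _ hs _ ht)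
    · rw [measure_symmetrize hτ (axisCoord_boost he) (measurePreserving_boost he) hY, hY_vol]
    · obtain rfl | hj := Finset.mem_insert.1 hj
      · exact (mapsTo_reverse_symmetrize (axisCoord_boost he)).congr fun x _ =>
          (reflection_eq_boost he x).symm
      · have hfix : (ℝ ∙ b j)ᗮ.reflection (b i) = b i :=
          Submodule.reflection_mem_subspace_eq_self
            (Submodule.mem_orthogonal_singleton_iff_inner_right.2
              (b.inner_eq_zero (ne_of_mem_of_not_mem hj hi)))
        let L : E →ₗᵢ[ℝ] E := (ℝ ∙ b j)ᗮ.reflection.toLinearIsometry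
        exact mapsTo_symmetrize (boost_map_of_map_eq_self L hfix)
          (axisCoord_map_of_map_eq_self L hfix) (hY_refl j hj)

lemma hyperboloidVol_le_of_coshDist_le {X : Set E} {r : ℝ}
    (hX : ∀ x ∈ X, ∀ y ∈ X, coshDist x y ≤ Real.cosh (2 * r)) :
    hyperboloidVol E X ≤ hyperboloidVol E {x | height x ≤ Real.cosh r} := by
  let b := stdOrthonormalBasis ℝ E
  obtain ⟨Y, -, hY, hY_vol, hY_refl⟩ := exists_mapsTo_reflection_of_coshDist_le b Finset.univ
    isClosed_closure.measurableSet (coshDist_le_of_mem_closure hX)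
  have hY_sub : Y ⊆ {x | height x ≤ Real.cosh r} := fun x hx => by
    have hx' : -x ∈ Y := neg_mem_of_mapsTo_reflection b (fun i => hY_refl i (Finset.mem_univ i)) hx
    have h := hY x hx (-x) hx'
    rw [coshDist_neg_right_self, Real.cosh_two_mul, Real.sinh_sq] at h
    exact le_of_sq_le_sq (by linarith) (Real.cosh_pos r).le
  calc hyperboloidVol E X ≤ hyperboloidVol E (closure X) := measure_mono subset_closure
    _ = hyperboloidVol E Y := hY_vol.symm
    _ ≤ hyperboloidVol E {x | height x ≤ Real.cosh r} := measure_mono hY_sub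

end Isodiametric

/-! ### The Klein model -/

section Klein

open OpenPartialHomeomorph

variable {E : Type*} [NormedAddCommGroup E] [InnerProductSpace ℝ E]

lemma univUnitBall_eq_smul (x : E) : univUnitBall x = (height x)⁻¹ • x := univUnitBall_apply x

lemma range_univUnitBall : range (univUnitBall : E → E) = ball 0 1 := by
  rw [← image_univ]
  exact univUnitBall.image_source_eq_target

lemma univUnitBall_injective : (univUnitBall : E → E).Injective :=
  injOn_univ.1 univUnitBall.injOn

lemma norm_univUnitBall (x : E) : ‖univUnitBall x‖ = ‖x‖ / height x := by
  rw [univUnitBall_eq_smul, norm_smul, norm_inv, Real.norm_of_nonneg (height_pos x).le,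
    inv_mul_eq_div]

lemma one_sub_norm_univUnitBall_sq (x : E) : 1 - ‖univUnitBall x‖ ^ 2 = (height x)⁻¹ ^ 2 := by
  have h := height_pos x
  rw [norm_univUnitBall]
  field_simp
  rw [height_sq]
  ring

lemma norm_univUnitBall_le_tanh {x : E} {r : ℝ} (hr : 0 ≤ r) (hx : height x ≤ Real.cosh r) :
    ‖univUnitBall x‖ ≤ Real.tanh r := by
  have h : ‖univUnitBall x‖ ^ 2 ≤ Real.tanh r ^ 2 := by
    have h_inv : (Real.cosh r)⁻¹ ^ 2 ≤ (height x)⁻¹ ^ 2 := by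
      have := height_pos x
      gcongr
    have h_tanh : Real.tanh r ^ 2 = 1 - (Real.cosh r)⁻¹ ^ 2 := by
      have := Real.cosh_pos r
      rw [Real.tanh_eq_sinh_div_cosh, div_pow, Real.sinh_sq]
      field_simp
    linarith [one_sub_norm_univUnitBall_sq x]
  refine le_of_sq_le_sq h ?_
  rw [Real.tanh_eq_sinh_div_cosh]
  exact div_nonneg (Real.sinh_nonneg_iff.2 hr) (Real.cosh_pos r).le

lemma hasFDerivAt_univUnitBall (x : E) : HasFDerivAt (univUnitBall : E → E)
    ((height x)⁻¹ • (ContinuousLinearMap.id ℝ E +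
      (-((height x)⁻¹ ^ 2 • innerSL ℝ x)).smulRight x)) x := by
  have h_inv := (hasDerivAt_inv (height_pos x).ne').comp_hasFDerivAt x (hasFDerivAt_height x)
  have h := h_inv.smul (hasFDerivAt_id x)
  refine (h.congr_fderiv ?_).congr_of_eventuallyEq (.of_forall univUnitBall_eq_smul)
  ext v
  simp only [Function.comp_apply, id_eq, add_apply, smul_apply, neg_apply, innerSL_apply_apply,
    ContinuousLinearMap.id_apply, ContinuousLinearMap.smulRight_apply, smul_eq_mul, inv_pow]
  module

lemma det_fderiv_univUnitBall [FiniteDimensional ℝ E] (x : E) :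
    ((height x)⁻¹ • (ContinuousLinearMap.id ℝ E +
      (-((height x)⁻¹ ^ 2 • innerSL ℝ x)).smulRight x)).det = (height x)⁻¹ ^ (finrank ℝ E + 2) := by
  have h := height_pos x
  have h_trans : 1 + (-((height x)⁻¹ ^ 2 • innerSL ℝ x)) x = (height x)⁻¹ ^ 2 := by
    rw [neg_apply, smul_apply, innerSL_apply_apply, real_inner_self_eq_norm_sq, smul_eq_mul]
    field_simp
    rw [height_sq]
    ring
  rw [ContinuousLinearMap.det, ContinuousLinearMap.toLinearMap_smul, LinearMap.det_smul,
    ← ContinuousLinearMap.det, det_id_add_smulRight, h_trans, pow_add]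

lemma map_univUnitBall_hyperboloidVol [FiniteDimensional ℝ E] [MeasurableSpace E] [BorelSpace E] :
    (hyperboloidVol E).map univUnitBall = (volume.withDensity fun x : E =>
      ENNReal.ofReal ((1 - ‖x‖ ^ 2) ^ (-(((finrank ℝ E : ℝ) + 1) / 2)))).restrict (ball 0 1) := by
  rw [← range_univUnitBall]
  refine map_withDensity_eq_restrict_range volume hasFDerivAt_univUnitBall
    univUnitBall_injective fun x => ?_
  have h := height_pos x
  have h_weight : (1 - ‖univUnitBall x‖ ^ 2) ^ (-(((finrank ℝ E : ℝ) + 1) / 2)) =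
      height x ^ (finrank ℝ E + 1) := by
    rw [one_sub_norm_univUnitBall_sq, ← Real.rpow_natCast_mul (by positivity),
      Real.inv_rpow h.le, ← Real.rpow_neg h.le, ← Real.rpow_natCast]
    push_cast
    ring_nf
  rw [det_fderiv_univUnitBall, h_weight, ← ENNReal.ofReal_mul (abs_nonneg _),
    abs_of_pos (by positivity)]
  congr 1
  rw [pow_succ, inv_pow, mul_right_comm, inv_mul_cancel₀ (by positivity), one_mul]

variable {n : ℕ}

lemma hypVol_eq_hyperboloidVol_preimage {X : Set (Fsp n)} (hX : ∀ x ∈ X, ‖x‖ < 1) :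
    hypVol n X = hyperboloidVol (Fsp n) (univUnitBall ⁻¹' X) := by
  have hX_ball : X ⊆ ball 0 1 := fun x hx => mem_ball_zero_iff.2 (hX x hx)
  have h_meas : Measurable (univUnitBall : Fsp n → Fsp n) :=
    (continuous_iff_continuousAt.2 fun x => (hasFDerivAt_univUnitBall x).continuousAt).measurable
  rw [← (h_meas.measurableEmbedding univUnitBall_injective).map_apply,
    map_univUnitBall_hyperboloidVol, Measure.restrict_eq_self _ hX_ball, finrank_euclideanSpace_fin,
    hypVol]

lemma hypDist_univUnitBall (x y : Fsp n) :
    hypDist (univUnitBall x) (univUnitBall y) = Real.arcosh (coshDist x y) := by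
  have hx := height_pos x
  have hy := height_pos y
  rw [hypDist, one_sub_norm_univUnitBall_sq, one_sub_norm_univUnitBall_sq, ← mul_pow,
    Real.sqrt_sq (by positivity), univUnitBall_eq_smul, univUnitBall_eq_smul, inner_smul_left,
    inner_smul_right, conj_trivial, coshDist, arcosh, Real.arcosh]
  field_simp

lemma coshDist_le_cosh_of_hypDist_le {x y : Fsp n} {D : ℝ}
    (h : hypDist (univUnitBall x) (univUnitBall y) ≤ D) : coshDist x y ≤ Real.cosh D := by
  rw [hypDist_univUnitBall] at h
  have h₀ := Real.arcosh_nonneg (one_le_coshDist x y)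
  rw [← Real.cosh_arcosh (one_le_coshDist x y), Real.cosh_le_cosh, abs_of_nonneg h₀]
  exact h.trans (le_abs_self D)

lemma hypDist_nonneg {x y : Fsp n} (hx : ‖x‖ < 1) (hy : ‖y‖ < 1) : 0 ≤ hypDist x y := by
  rw [← mem_ball_zero_iff, ← range_univUnitBall] at hx hy
  obtain ⟨x, rfl⟩ := hx
  obtain ⟨y, rfl⟩ := hy
  rw [hypDist_univUnitBall]
  exact Real.arcosh_nonneg (one_le_coshDist x y)

theorem hyperbolic_isodiametric_general {D : ℝ} {X : Set (Fsp n)} (hX : ∀ x ∈ X, ‖x‖ < 1)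
    (hdiam : ∀ x ∈ X, ∀ y ∈ X, hypDist x y ≤ D) :
    hypVol n X ≤ hypVol n {x : Fsp n | ‖x‖ ≤ Real.tanh (D / 2)} := by
  obtain rfl | ⟨x₀, hx₀⟩ := X.eq_empty_or_nonempty
  · simp
  have hD : 0 ≤ D := (hypDist_nonneg (hX x₀ hx₀) (hX x₀ hx₀)).trans (hdiam x₀ hx₀ x₀ hx₀)
  calc hypVol n X = hyperboloidVol (Fsp n) (univUnitBall ⁻¹' X) :=
        hypVol_eq_hyperboloidVol_preimage hX
    _ ≤ hyperboloidVol (Fsp n) {x | height x ≤ Real.cosh (D / 2)} :=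
        hyperboloidVol_le_of_coshDist_le fun x hx y hy => by
          rw [mul_div_cancel₀ D two_ne_zero]
          exact coshDist_le_cosh_of_hypDist_le (hdiam _ hx _ hy)
    _ ≤ hyperboloidVol (Fsp n) (univUnitBall ⁻¹' {x | ‖x‖ ≤ Real.tanh (D / 2)}) :=
        measure_mono fun x hx => norm_univUnitBall_le_tanh (by positivity) hx
    _ = hypVol n {x | ‖x‖ ≤ Real.tanh (D / 2)} :=
        (hypVol_eq_hyperboloidVol_preimage fun x hx => hx.trans_lt (Real.tanh_lt_one _)).symm

end Klein

/-- hyperbolic isodiametric inequality (Klein model). -/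
theorem hyperbolic_isodiametric (n : ℕ) (hn : 2 ≤ n) (D : ℝ) (hD : 0 < D)
    (X : Set (Fsp n)) (hX : ∀ x ∈ X, ‖x‖ < 1) (hXm : MeasurableSet X)
    (hdiam : ∀ x ∈ X, ∀ y ∈ X, hypDist x y ≤ D) :
    hypVol n X ≤ hypVol n {x : Fsp n | ‖x‖ ≤ Real.tanh (D / 2)} :=
  hyperbolic_isodiametric_general hX hdiam
end
end
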